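/- arXiv:0801.4259 — 2 statements merged into one kernel-verified Lean document; each statement's English description precedes it below -/
import Mathlib

section
/- Let H be a complex Hilbert space, M a von Neumann algebra acting on H, ξ₀ a cyclic and separating vector for M, and N another von Neumann algebra acting on H with the closure of {b ξ₀ : b ∈ N, b ≥ 0} contained in P♯. Let α : N → B(H) be a linear map such that α(x) ∈ M and α(x) ξ₀ = x ξ₀ for every x ∈ N. Then α is contractive on self-adjoint elements: for every self-adjoint x ∈ N, ‖α(x)‖ ≤ ‖x‖. -/
open scoped InnerProductSpace
open Filter

variable {H : Type*} [NormedAddCommGroup H] [InnerProductSpace ℂ H] [CompleteSpace H]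

/-- The positive cone `P♯`: the closure in `H` of `{a ξ₀ : a ∈ M, a positive}`. -/
def sharpCone (M : VonNeumannAlgebra H) (ξ₀ : H) : Set H :=
  closure {ζ : H | ∃ a : H →L[ℂ] H, a ∈ M ∧ a.IsPositive ∧ a ξ₀ = ζ}

/-- `ξ₀` is a cyclic vector for `M`: the linear span of `{x ξ₀ : x ∈ M}` is dense in `H`. -/
def IsCyclicVector (M : VonNeumannAlgebra H) (ξ₀ : H) : Prop :=
  Dense ((Submodule.span ℂ ((fun x : H →L[ℂ] H => x ξ₀) '' (M : Set (H →L[ℂ] H)))) : Set H)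

/-- `ξ₀` is a separating vector for `M`: `x ∈ M` and `x ξ₀ = 0` imply `x = 0`. -/
def IsSeparatingVector (M : VonNeumannAlgebra H) (ξ₀ : H) : Prop :=
  ∀ x : H →L[ℂ] H, x ∈ M → x ξ₀ = 0 → x = 0

open scoped ComplexOrder

/-- A separating vector for `M` is cyclic for the commutant of `M`. -/
theorem IsSeparatingVector.dense_commutant {M : VonNeumannAlgebra H} {ξ₀ : H}
    (hsep : IsSeparatingVector M ξ₀) :
    Dense {ζ : H | ∃ y ∈ M.commutant, y ξ₀ = ζ} := by
  let V : Submodule ℂ H :=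
    M.commutant.toStarSubalgebra.toSubalgebra.toSubmodule.map
      (ContinuousLinearMap.apply ℂ H ξ₀ : (H →L[ℂ] H) →ₗ[ℂ] H)
  have hV : (V : Set H) = {ζ : H | ∃ y ∈ M.commutant, y ξ₀ = ζ} := rfl
  let K := V.topologicalClosure
  have : CompleteSpace K := V.isClosed_topologicalClosure.completeSpace_coe
  have hinv : ∀ y ∈ M.commutant, ∀ v ∈ K, y v ∈ K := by
    intro y hy v hv
    refine map_mem_closure y.continuous hv ?_
    rintro _ ⟨z, hz, rfl⟩
    exact ⟨y * z, mul_mem (S := VonNeumannAlgebra H) hy hz, rfl⟩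
  have hmem : K.starProjection ∈ M := by
    rw [VonNeumannAlgebra.IsStarProjection.mem_iff isStarProjection_starProjection,
      Submodule.range_starProjection]
    exact fun y hy v hv => hinv y hy v hv
  have hξ : ξ₀ ∈ K := subset_closure ⟨1, one_mem M.commutant, rfl⟩
  have hone : 1 - K.starProjection = 0 := by
    refine hsep _ (sub_mem (one_mem M) hmem) ?_
    simp [Submodule.starProjection_eq_self_iff.2 hξ]
  intro v
  have hv : K.starProjection v = v := by
    rw [← sub_eq_zero.1 hone, one_apply_eq_self]
  exact hV ▸ Submodule.starProjection_eq_self_iff.1 hv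

/-- For `T` in `M` and `y` in the commutant, the quadratic form of `T` at `y ξ` only depends
on `T ξ`. -/
theorem VonNeumannAlgebra.inner_apply_commutant {M : VonNeumannAlgebra H} {T y : H →L[ℂ] H}
    (hT : T ∈ M) (hy : y ∈ M.commutant) (ξ : H) :
    ⟪T (y ξ), y ξ⟫_ℂ = ⟪y (T ξ), y ξ⟫_ℂ := by
  have h : T * y = y * T := VonNeumannAlgebra.mem_commutant_iff.1 hy T hT
  exact congrArg (fun S : H →L[ℂ] H => ⟪S ξ, y ξ⟫_ℂ) h

/-- An element of `M` mapping a separating vector into the cone `P♯` is positive. -/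
theorem IsSeparatingVector.isPositive_of_apply_mem_sharpCone {M : VonNeumannAlgebra H} {ξ₀ : H}
    (hsep : IsSeparatingVector M ξ₀) {T : H →L[ℂ] H} (hT : T ∈ M)
    (hTξ : T ξ₀ ∈ sharpCone M ξ₀) : T.IsPositive := by
  have hcomm : ∀ y ∈ M.commutant, 0 ≤ ⟪T (y ξ₀), y ξ₀⟫_ℂ := by
    intro y hy
    rw [VonNeumannAlgebra.inner_apply_commutant hT hy]
    have hclosed : IsClosed {ζ : H | 0 ≤ ⟪y ζ, y ξ₀⟫_ℂ} :=
      isClosed_le continuous_const (by fun_prop)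
    refine closure_minimal ?_ hclosed hTξ
    rintro _ ⟨a, ha, hpos, rfl⟩
    rw [Set.mem_ofPred_eq, ← VonNeumannAlgebra.inner_apply_commutant ha hy]
    exact hpos.inner_nonneg_left _
  have hall : ∀ v, 0 ≤ ⟪T v, v⟫_ℂ := by
    have hclosed : IsClosed {v : H | 0 ≤ ⟪T v, v⟫_ℂ} :=
      isClosed_le continuous_const (by fun_prop)
    intro v
    refine closure_minimal ?_ hclosed (hsep.dense_commutant v)
    rintro _ ⟨y, hy, rfl⟩
    exact hcomm y hy
  rw [ContinuousLinearMap.isPositive_iff_complex]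
  intro v
  obtain ⟨hre, him⟩ := Complex.nonneg_iff.1 (hall v)
  exact ⟨Complex.ext rfl (by simpa using him), hre⟩

/-- If `-c ≤ T ≤ c` for a real `c ≥ 0`, then `‖T‖ ≤ c`. -/
theorem ContinuousLinearMap.norm_le_of_isPositive {T : H →L[ℂ] H} {c : ℝ} (hc : 0 ≤ c)
    (hadd : ((c : ℂ) • (1 : H →L[ℂ] H) + T).IsPositive)
    (hsub : ((c : ℂ) • (1 : H →L[ℂ] H) + (-1 : ℂ) • T).IsPositive) : ‖T‖ ≤ c := by
  have hc1 : IsSelfAdjoint ((c : ℂ) • (1 : H →L[ℂ] H)) :=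
    IsSelfAdjoint.smul (Complex.conj_ofReal c) (IsSelfAdjoint.one _)
  have hT : IsSelfAdjoint T := by
    simpa using hadd.isSelfAdjoint.sub hc1
  rw [T.norm_eq_iSup_rayleighQuotient hT.isSymmetric]
  refine ciSup_le fun v => ?_
  have h₁ := hadd.re_inner_nonneg_left v
  have h₂ := hsub.re_inner_nonneg_left v
  have hv : (⟪v, v⟫_ℂ).re = ‖v‖ ^ 2 := inner_self_eq_norm_sq (𝕜 := ℂ) v
  simp [inner_add_left, hv, -inner_self_eq_norm_sq_to_K] at h₁ h₂
  rw [ContinuousLinearMap.rayleighQuotient, abs_div, abs_sq]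
  refine div_le_of_le_mul₀ (sq_nonneg _) hc (abs_le.2 ⟨?_, ?_⟩)
  · change _ ≤ (⟪T v, v⟫_ℂ).re
    linarith
  · change (⟪T v, v⟫_ℂ).re ≤ _
    linarith

/-- A self-adjoint operator `x` satisfies `0 ≤ ‖x‖ + x`. -/
theorem IsSelfAdjoint.isPositive_norm_smul_one_add {x : H →L[ℂ] H} (hx : IsSelfAdjoint x) :
    (((‖x‖ : ℝ) : ℂ) • (1 : H →L[ℂ] H) + x).IsPositive := by
  have h := hx.neg_algebraMap_norm_le_self
  rw [ContinuousLinearMap.le_def, sub_neg_eq_add, add_comm, Algebra.algebraMap_eq_smul_one] at h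
  simpa using h

/-- The map `α` is contractive on self-adjoint elements of `N`. -/
theorem stmt3 (M N : VonNeumannAlgebra H) (ξ₀ : H)
    (hcyc : IsCyclicVector M ξ₀) (hsep : IsSeparatingVector M ξ₀)
    (hsub : closure {ζ : H | ∃ b : H →L[ℂ] H, b ∈ N ∧ b.IsPositive ∧ b ξ₀ = ζ} ⊆
      sharpCone M ξ₀)
    (α : (H →L[ℂ] H) → (H →L[ℂ] H))
    (hadd : ∀ x ∈ N, ∀ y ∈ N, α (x + y) = α x + α y)
    (hsmul : ∀ (c : ℂ), ∀ x ∈ N, α (c • x) = c • α x)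
    (hmem : ∀ x ∈ N, α x ∈ M)
    (hfix : ∀ x ∈ N, (α x) ξ₀ = x ξ₀) :
    ∀ x ∈ N, IsSelfAdjoint x → ‖α x‖ ≤ ‖x‖ := by
  intro x hx hxs
  have hpos : ∀ b ∈ N, b.IsPositive → (α b).IsPositive := fun b hb hbp =>
    hsep.isPositive_of_apply_mem_sharpCone (hmem b hb)
      (hsub (subset_closure ⟨b, hb, hbp, (hfix b hb).symm⟩))
  have hone : α 1 = 1 := sub_eq_zero.1 <|
    hsep _ (sub_mem (hmem 1 (one_mem N)) (one_mem M)) (by simp [hfix 1 (one_mem N)])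
  have hsmem : ∀ (c : ℂ), ∀ y ∈ N, c • y ∈ N := fun c y hy =>
    N.toStarSubalgebra.smul_mem hy c
  have hshift : ∀ y ∈ N, IsSelfAdjoint y →
      (((‖y‖ : ℝ) : ℂ) • (1 : H →L[ℂ] H) + α y).IsPositive := by
    intro y hy hys
    have hcN := hsmem ((‖y‖ : ℝ) : ℂ) 1 (one_mem N)
    have h := hpos _ (add_mem hcN hy) hys.isPositive_norm_smul_one_add
    rwa [hadd _ hcN _ hy, hsmul _ _ (one_mem N), hone] at h
  refine ContinuousLinearMap.norm_le_of_isPositive (norm_nonneg x) (hshift x hx hxs) ?_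
  have h := hshift ((-1 : ℂ) • x) (hsmem _ x hx) (by simpa using hxs.neg)
  rwa [hsmul _ _ hx, norm_smul, norm_neg, norm_one, one_mul] at h
end

section
/- Let H be a complex Hilbert space, M a von Neumann algebra acting on H, and ξ₀ a cyclic and separating vector for M. Let N be another von Neumann algebra acting on H such that ξ₀ is cyclic for N and the closure of {b ξ₀ : b ∈ N, b ≥ 0} is contained in P♯. Then: (1) ξ₀ is separating for N; (2) there exists a projection e in the center of N (e ∈ N and e commutes with every element of N) such that x e ∈ M for every x ∈ N; (3) the vector (1 − e) ξ₀ is tracial for N(1−e), i.e. ⟨x y (1−e) ξ₀, (1−e) ξ₀⟩ = ⟨y x (1−e) ξ₀, (1−e) ξ₀⟩ for all x, y ∈ N. -/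
open scoped InnerProductSpace
open Filter

variable {H : Type*} [NormedAddCommGroup H] [InnerProductSpace ℂ H] [CompleteSpace H]

section SelfAdjointPolarization

variable {A E : Type*} [Ring A] [Algebra ℂ A] [StarRing A] [StarModule ℂ A]
  [AddCommGroup E] [Module ℂ E]

/-- A complex linear map vanishing on self-adjoint elements is zero. -/
theorem LinearMap.eq_zero_of_forall_isSelfAdjoint (L : A →ₗ[ℂ] E)
    (h : ∀ x, IsSelfAdjoint x → L x = 0) (x : A) : L x = 0 := by
  rw [← realPart_add_I_smul_imaginaryPart x, map_add, map_smul,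
    h _ (realPart x).2, h _ (imaginaryPart x).2, smul_zero, add_zero]

/-- A complex bilinear map vanishing on the diagonal of self-adjoint elements is alternating. -/
theorem LinearMap.self_eq_zero_of_forall_isSelfAdjoint (β : A →ₗ[ℂ] A →ₗ[ℂ] E)
    (h : ∀ x, IsSelfAdjoint x → β x x = 0) (x : A) : β x x = 0 := by
  have h₁ := h _ (realPart x).2
  have h₂ := h _ (imaginaryPart x).2
  have h₃ := h _ ((realPart x).2.add (imaginaryPart x).2)
  rw [← realPart_add_I_smul_imaginaryPart x]
  simp only [map_add, map_smul, LinearMap.add_apply, LinearMap.smul_apply] at h₃ ⊢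
  rw [h₁, h₂, zero_add, add_zero] at h₃
  rw [h₁, h₂, smul_zero, zero_add, add_zero, ← smul_add, h₃, smul_zero]

end SelfAdjointPolarization

section JordanDefects

variable {A B : Type*} [Ring A] [Algebra ℂ A] [CStarAlgebra B]

/-- The failure of a linear map `Φ` to be multiplicative, as a bilinear map. -/
noncomputable def homDefect (Φ : A →ₗ[ℂ] B) : A →ₗ[ℂ] A →ₗ[ℂ] B :=
  LinearMap.mk₂ ℂ (fun x y => Φ (x * y) - Φ x * Φ y)
    (fun x x' y => by simp only [add_mul, map_add]; abel)
    (fun c x y => by simp only [smul_mul_assoc, map_smul, smul_sub])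
    (fun x y y' => by simp only [mul_add, map_add]; abel)
    (fun c x y => by simp only [mul_smul_comm, map_smul, smul_sub])

/-- The failure of a linear map `Φ` to be antimultiplicative, as a bilinear map. -/
noncomputable def antiDefect (Φ : A →ₗ[ℂ] B) : A →ₗ[ℂ] A →ₗ[ℂ] B :=
  LinearMap.mk₂ ℂ (fun x y => Φ (x * y) - Φ y * Φ x)
    (fun x x' y => by simp only [add_mul, mul_add, map_add]; abel)
    (fun c x y => by simp only [smul_mul_assoc, mul_smul_comm, map_smul, smul_sub])
    (fun x y y' => by simp only [mul_add, add_mul, map_add]; abel)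
    (fun c x y => by simp only [smul_mul_assoc, mul_smul_comm, map_smul, smul_sub])

theorem homDefect_apply (Φ : A →ₗ[ℂ] B) (x y : A) :
    homDefect Φ x y = Φ (x * y) - Φ x * Φ y := rfl

theorem antiDefect_apply (Φ : A →ₗ[ℂ] B) (x y : A) :
    antiDefect Φ x y = Φ (x * y) - Φ y * Φ x := rfl

/-- A unital linear map that preserves squares, in polarized form. -/
structure IsJordanHom (Φ : A →ₗ[ℂ] B) : Prop where
  map_one : Φ 1 = 1
  map_jordan : ∀ x y, Φ (x * y) + Φ (y * x) = Φ x * Φ y + Φ y * Φ x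

theorem eq_of_add_self_eq {u v : B} (h : u + u = v + v) : u = v := by
  have : (2 : ℂ) • u = (2 : ℂ) • v := by simpa only [two_smul] using h
  exact smul_right_injective B (two_ne_zero (α := ℂ)) this

namespace IsJordanHom

variable {Φ : A →ₗ[ℂ] B}

theorem map_mul_mul_self (hΦ : IsJordanHom Φ) (x y : A) :
    Φ (x * (y * x)) = Φ x * (Φ y * Φ x) := by
  have h₁ := hΦ.map_jordan x (x * y + y * x)
  have h₂ := hΦ.map_jordan (x * x) y
  have h₃ := hΦ.map_jordan x y
  rw [eq_of_add_self_eq (hΦ.map_jordan x x)] at h₂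
  simp only [mul_add, add_mul, map_add, mul_assoc] at h₁ h₂
  apply eq_of_add_self_eq
  linear_combination (norm := noncomm_ring) h₁ - h₂ + Φ x * h₃ + h₃ * Φ x

theorem map_triple (hΦ : IsJordanHom Φ) (x y z : A) :
    Φ (x * (y * z)) + Φ (z * (y * x)) = Φ x * (Φ y * Φ z) + Φ z * (Φ y * Φ x) := by
  have h := hΦ.map_mul_mul_self (x + z) y
  have h₁ := hΦ.map_mul_mul_self x y
  have h₂ := hΦ.map_mul_mul_self z y
  simp only [mul_add, add_mul, map_add] at h
  linear_combination (norm := noncomm_ring) h - h₁ - h₂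

theorem homDefect_swap (hΦ : IsJordanHom Φ) (x y : A) :
    homDefect Φ x y = -homDefect Φ y x := by
  have h := hΦ.map_jordan x y
  simp only [homDefect_apply]
  linear_combination (norm := noncomm_ring) h

theorem antiDefect_swap (hΦ : IsJordanHom Φ) (x y : A) :
    antiDefect Φ x y = -antiDefect Φ y x := by
  have h := hΦ.map_jordan x y
  simp only [antiDefect_apply]
  linear_combination (norm := noncomm_ring) h

theorem homDefect_mul_left (hΦ : IsJordanHom Φ) (x b : A) :
    homDefect Φ (b * x) b = homDefect Φ x b * Φ b := by
  have h := hΦ.map_jordan x b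
  have h' := hΦ.map_mul_mul_self b x
  simp only [homDefect_apply, mul_assoc]
  linear_combination (norm := noncomm_ring) h' - h * Φ b

theorem antiDefect_mul_left (hΦ : IsJordanHom Φ) (x b : A) :
    antiDefect Φ (b * x) b = Φ b * antiDefect Φ x b := by
  have h := hΦ.map_jordan x b
  have h' := hΦ.map_mul_mul_self b x
  simp only [antiDefect_apply, mul_assoc]
  linear_combination (norm := noncomm_ring) h' - Φ b * h

theorem comm_homDefect (hΦ : IsJordanHom Φ) (w x b : A) :
    homDefect Φ x b * Φ w - Φ w * homDefect Φ x b = homDefect Φ w (x * b - b * x) := by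
  have h₁ := hΦ.map_triple w x b
  have h₂ := hΦ.map_triple w b x
  have h₃ := hΦ.map_jordan w (x * b)
  have h₄ := hΦ.map_jordan w (b * x)
  have h₅ := hΦ.map_jordan x b
  simp only [mul_assoc] at h₃ h₄
  simp only [homDefect_apply, mul_sub, map_sub]
  apply eq_of_add_self_eq
  linear_combination (norm := noncomm_ring) -h₁ + h₂ - h₃ + h₄ + h₅ * Φ w - Φ w * h₅

theorem comm_antiDefect (hΦ : IsJordanHom Φ) (w x b : A) :
    Φ w * antiDefect Φ x b - antiDefect Φ x b * Φ w = antiDefect Φ w (x * b - b * x) := by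
  have h₁ := hΦ.map_triple w x b
  have h₂ := hΦ.map_triple w b x
  have h₃ := hΦ.map_jordan w (x * b)
  have h₄ := hΦ.map_jordan w (b * x)
  have h₅ := hΦ.map_jordan x b
  simp only [mul_assoc] at h₃ h₄
  simp only [antiDefect_apply, mul_sub, map_sub]
  apply eq_of_add_self_eq
  linear_combination (norm := noncomm_ring) -h₁ + h₂ - h₃ + h₄ + Φ w * h₅ - h₅ * Φ w

theorem homDefect_mul_antiDefect_add (hΦ : IsJordanHom Φ) (x b w : A) :
    homDefect Φ x b * Φ w * antiDefect Φ x b + antiDefect Φ x b * Φ w * homDefect Φ x b = 0 := by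
  have h := hΦ.map_jordan x b
  have h₁ := hΦ.map_triple (x * b) w (b * x)
  have h₂ := hΦ.map_mul_mul_self x (b * (w * b))
  have h₃ := hΦ.map_mul_mul_self b (x * (w * x))
  rw [hΦ.map_mul_mul_self b w] at h₂
  rw [hΦ.map_mul_mul_self x w] at h₃
  simp only [mul_assoc] at h₁ h₂ h₃
  simp only [homDefect_apply, antiDefect_apply]
  linear_combination (norm := noncomm_ring)
    Φ (x * b) * Φ w * h + h * Φ w * Φ (x * b) + h₁ - h₂ - h₃

theorem homDefect_mul_antiDefect_self (hΦ : IsJordanHom Φ) (x b : A) :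
    homDefect Φ x b * antiDefect Φ x b = 0 ∧ antiDefect Φ x b * homDefect Φ x b = 0 := by
  have h := hΦ.homDefect_mul_antiDefect_add x b 1
  have h' := hΦ.comm_homDefect (x * b - b * x) x b
  have h'' := hΦ.homDefect_swap (x * b - b * x) (x * b - b * x)
  have hs : Φ (x * b - b * x) = homDefect Φ x b + antiDefect Φ x b := by
    have := hΦ.map_jordan x b
    simp only [homDefect_apply, antiDefect_apply, map_sub]
    linear_combination (norm := noncomm_ring) -this
  have h₀ : homDefect Φ (x * b - b * x) (x * b - b * x) = 0 :=
    eq_of_add_self_eq (by linear_combination (norm := noncomm_ring) h'')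
  rw [h₀, hs] at h'
  rw [hΦ.map_one, mul_one, mul_one] at h
  constructor <;> apply eq_of_add_self_eq
  · linear_combination (norm := noncomm_ring) h + h'
  · linear_combination (norm := noncomm_ring) h - h'

variable [StarRing A]

theorem star_homDefect (hs : ∀ x, Φ (star x) = star (Φ x)) (x y : A) :
    star (homDefect Φ x y) = homDefect Φ (star y) (star x) := by
  simp [homDefect_apply, ← hs]

theorem star_antiDefect (hs : ∀ x, Φ (star x) = star (Φ x)) (x y : A) :
    star (antiDefect Φ x y) = antiDefect Φ (star y) (star x) := by
  simp [antiDefect_apply, ← hs]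

theorem star_homDefect_of_isSelfAdjoint (hΦ : IsJordanHom Φ)
    (hs : ∀ x, Φ (star x) = star (Φ x)) {x y : A} (hx : IsSelfAdjoint x) (hy : IsSelfAdjoint y) :
    star (homDefect Φ x y) = -homDefect Φ x y := by
  rw [star_homDefect hs, hx.star_eq, hy.star_eq, hΦ.homDefect_swap]

theorem star_antiDefect_of_isSelfAdjoint (hΦ : IsJordanHom Φ)
    (hs : ∀ x, Φ (star x) = star (Φ x)) {x y : A} (hx : IsSelfAdjoint x) (hy : IsSelfAdjoint y) :
    star (antiDefect Φ x y) = -antiDefect Φ x y := by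
  rw [star_antiDefect hs, hx.star_eq, hy.star_eq, hΦ.antiDefect_swap]

variable [StarModule ℂ A]

theorem homDefect_mul_map_mul_antiDefect_same (hΦ : IsJordanHom Φ)
    (hs : ∀ x, Φ (star x) = star (Φ x)) (x b w : A) :
    homDefect Φ x b * Φ w * antiDefect Φ x b = 0 := by
  have key : ∀ x b w, IsSelfAdjoint x → IsSelfAdjoint b → IsSelfAdjoint w →
      homDefect Φ x b * Φ w * antiDefect Φ x b = 0 := by
    intro x b w hx hb hw
    have h₁ := hΦ.homDefect_mul_antiDefect_add x b w
    have h₂ := (hΦ.homDefect_mul_antiDefect_self x b).2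
    rw [← CStarRing.star_mul_self_eq_zero_iff]
    have h₃ : star (homDefect Φ x b * Φ w * antiDefect Φ x b) =
        antiDefect Φ x b * Φ w * homDefect Φ x b := by
      rw [star_mul, star_mul, hΦ.star_homDefect_of_isSelfAdjoint hs hx hb,
        hΦ.star_antiDefect_of_isSelfAdjoint hs hx hb, ← hs, hw.star_eq]
      noncomm_ring
    rw [h₃, eq_neg_of_add_eq_zero_right h₁]
    linear_combination (norm := noncomm_ring)
      - (homDefect Φ x b * Φ w) * h₂ * (Φ w * antiDefect Φ x b)
  have key₂ : ∀ x b w, IsSelfAdjoint x → IsSelfAdjoint b →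
      homDefect Φ x b * Φ w * antiDefect Φ x b = 0 := fun x b w hx hb =>
    LinearMap.eq_zero_of_forall_isSelfAdjoint
      (LinearMap.mulRight ℂ (antiDefect Φ x b) ∘ₗ LinearMap.mulLeft ℂ (homDefect Φ x b) ∘ₗ Φ)
      (fun w hw => key x b w hx hb hw) w
  have key₃ : ∀ x b w, IsSelfAdjoint b →
      homDefect Φ x b * Φ w * antiDefect Φ x b = 0 := fun x b w hb =>
    LinearMap.self_eq_zero_of_forall_isSelfAdjoint
      ((LinearMap.mul ℂ B).compl₁₂ (LinearMap.mulRight ℂ (Φ w) ∘ₗ (homDefect Φ).flip b)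
        ((antiDefect Φ).flip b))
      (fun x hx => key₂ x b w hx hb) x
  exact LinearMap.self_eq_zero_of_forall_isSelfAdjoint
      ((LinearMap.mul ℂ B).compl₁₂ (LinearMap.mulRight ℂ (Φ w) ∘ₗ homDefect Φ x)
        (antiDefect Φ x))
      (fun b hb => key₃ x b w hb) b

theorem homDefect_mul_map_mul_antiDefect_swap (hΦ : IsJordanHom Φ)
    (hs : ∀ x, Φ (star x) = star (Φ x)) (x z b w : A) :
    homDefect Φ x b * Φ w * antiDefect Φ z b = -(homDefect Φ z b * Φ w * antiDefect Φ x b) := by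
  have h := hΦ.homDefect_mul_map_mul_antiDefect_same hs (x + z) b w
  have h₁ := hΦ.homDefect_mul_map_mul_antiDefect_same hs x b w
  have h₂ := hΦ.homDefect_mul_map_mul_antiDefect_same hs z b w
  simp only [map_add, LinearMap.add_apply] at h
  linear_combination (norm := noncomm_ring) h - h₁ - h₂

theorem homDefect_mul_antiDefect_common (hΦ : IsJordanHom Φ)
    (hs : ∀ x, Φ (star x) = star (Φ x)) (x z b : A) :
    homDefect Φ x b * antiDefect Φ z b = 0 := by
  have shift : ∀ x z b w, homDefect Φ x b * Φ w * Φ b * antiDefect Φ z b =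
      -(homDefect Φ z b * Φ b * Φ w * antiDefect Φ x b) := by
    intro x z b w
    have h := hΦ.homDefect_mul_map_mul_antiDefect_swap hs x (b * z) b w
    rw [hΦ.homDefect_mul_left, hΦ.antiDefect_mul_left, ← mul_assoc] at h
    exact h
  have key : ∀ x z b, IsSelfAdjoint x → IsSelfAdjoint z → IsSelfAdjoint b →
      homDefect Φ x b * antiDefect Φ z b = 0 := by
    intro x z b hx hz hb
    have h₁ := hΦ.homDefect_mul_map_mul_antiDefect_swap hs x z b (z * b)
    have h₂ := shift z x b z
    have h₃ : homDefect Φ x b * antiDefect Φ z b * antiDefect Φ z b =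
        -(homDefect Φ z b * homDefect Φ z b * antiDefect Φ x b) := by
      have hG := antiDefect_apply Φ z b
      have hF := homDefect_apply Φ z b
      linear_combination (norm := noncomm_ring) homDefect Φ x b * hG * antiDefect Φ z b +
        homDefect Φ z b * hF * antiDefect Φ x b + h₁ - h₂
    have h₄ := (hΦ.homDefect_mul_antiDefect_self x b).2
    rw [← CStarRing.mul_star_self_eq_zero_iff, star_mul,
      hΦ.star_homDefect_of_isSelfAdjoint hs hx hb, hΦ.star_antiDefect_of_isSelfAdjoint hs hz hb]
    linear_combination (norm := noncomm_ring)
      h₃ * homDefect Φ x b - homDefect Φ z b * homDefect Φ z b * h₄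
  have key₂ : ∀ x z b, IsSelfAdjoint x → IsSelfAdjoint b →
      homDefect Φ x b * antiDefect Φ z b = 0 := fun x z b hx hb =>
    LinearMap.eq_zero_of_forall_isSelfAdjoint
      (LinearMap.mulLeft ℂ (homDefect Φ x b) ∘ₗ (antiDefect Φ).flip b)
      (fun z hz => key x z b hx hz hb) z
  have key₃ : ∀ x z b, IsSelfAdjoint b →
      homDefect Φ x b * antiDefect Φ z b = 0 := fun x z b hb =>
    LinearMap.eq_zero_of_forall_isSelfAdjoint
      (LinearMap.mulRight ℂ (antiDefect Φ z b) ∘ₗ (homDefect Φ).flip b)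
      (fun x hx => key₂ x z b hx hb) x
  exact LinearMap.self_eq_zero_of_forall_isSelfAdjoint
      ((LinearMap.mul ℂ B).compl₁₂ (homDefect Φ x) (antiDefect Φ z))
      (fun b hb => key₃ x z b hb) b

theorem homDefect_mul_map_mul_antiDefect_common (hΦ : IsJordanHom Φ)
    (hs : ∀ x, Φ (star x) = star (Φ x)) (x w z b : A) :
    homDefect Φ x b * Φ w * antiDefect Φ z b = 0 := by
  have cyc : ∀ x w z, homDefect Φ x b * Φ w * antiDefect Φ z b =
      -(homDefect Φ w b * Φ z * antiDefect Φ x b) := by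
    intro x w z
    have h₁ := hΦ.comm_homDefect w x b
    have h₂ := hΦ.comm_antiDefect z x b
    have h₃ := hΦ.homDefect_mul_antiDefect_common hs x z b
    have h₄ := hΦ.homDefect_mul_antiDefect_common hs w x b
    have h₅ := hΦ.homDefect_mul_antiDefect_common hs w z (b + (x * b - b * x))
    have h₆ := hΦ.homDefect_mul_antiDefect_common hs w z b
    have h₇ := hΦ.homDefect_mul_antiDefect_common hs w z (x * b - b * x)
    rw [map_add, map_add, ← h₁, ← h₂] at h₅
    rw [← h₁, ← h₂] at h₇
    linear_combination (norm := noncomm_ring) h₅ - h₆ - h₇ + Φ w * h₃ + h₄ * Φ z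
  apply eq_of_add_self_eq
  linear_combination (norm := noncomm_ring) cyc x w z - cyc w z x + cyc z x w

theorem homDefect_mul_map_mul_antiDefect_exchange (hΦ : IsJordanHom Φ)
    (hs : ∀ x, Φ (star x) = star (Φ x)) (x b w z d : A) :
    homDefect Φ x b * Φ w * antiDefect Φ z d = homDefect Φ z d * Φ w * antiDefect Φ x b := by
  have pol : ∀ x b z d, homDefect Φ x b * Φ w * antiDefect Φ z d =
      -(homDefect Φ x d * Φ w * antiDefect Φ z b) := by
    intro x b z d
    have h := hΦ.homDefect_mul_map_mul_antiDefect_common hs x w z (b + d)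
    have h₁ := hΦ.homDefect_mul_map_mul_antiDefect_common hs x w z b
    have h₂ := hΦ.homDefect_mul_map_mul_antiDefect_common hs x w z d
    simp only [map_add] at h
    linear_combination (norm := noncomm_ring) h - h₁ - h₂
  rw [pol, hΦ.homDefect_swap x d, hΦ.antiDefect_swap z b, neg_mul, neg_mul_neg, pol,
    neg_neg, hΦ.homDefect_swap d z, hΦ.antiDefect_swap b x, neg_mul, neg_mul_neg]

/-- The multiplicative and antimultiplicative defects of a Jordan `*`-homomorphism into a
C⋆-algebra are orthogonal. -/
theorem homDefect_mul_antiDefect (hΦ : IsJordanHom Φ)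
    (hs : ∀ x, Φ (star x) = star (Φ x)) (x b z d : A) :
    homDefect Φ x b * antiDefect Φ z d = 0 := by
  have key : ∀ x b z d, IsSelfAdjoint x → IsSelfAdjoint b → IsSelfAdjoint z → IsSelfAdjoint d →
      homDefect Φ x b * antiDefect Φ z d = 0 := by
    intro x b z d hx hb hz hd
    have h₁ := hΦ.homDefect_mul_map_mul_antiDefect_exchange hs x b (z * d) z d
    have h₂ := hΦ.homDefect_mul_map_mul_antiDefect_exchange hs x b d z (z * d)
    rw [hΦ.antiDefect_swap z (z * d), hΦ.homDefect_swap z (z * d), hΦ.antiDefect_mul_left,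
      hΦ.homDefect_mul_left, hΦ.antiDefect_swap d z, hΦ.homDefect_swap d z] at h₂
    have h₃ : homDefect Φ x b * antiDefect Φ z d * antiDefect Φ z d =
        homDefect Φ z d * homDefect Φ z d * antiDefect Φ x b := by
      have hG := antiDefect_apply Φ z d
      have hF := homDefect_apply Φ z d
      linear_combination (norm := noncomm_ring) homDefect Φ x b * hG * antiDefect Φ z d -
        homDefect Φ z d * hF * antiDefect Φ x b + h₁ - h₂
    have h₄ := (hΦ.homDefect_mul_antiDefect_self x b).2
    rw [← CStarRing.mul_star_self_eq_zero_iff, star_mul,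
      hΦ.star_homDefect_of_isSelfAdjoint hs hx hb, hΦ.star_antiDefect_of_isSelfAdjoint hs hz hd]
    linear_combination (norm := noncomm_ring)
      h₃ * homDefect Φ x b + homDefect Φ z d * homDefect Φ z d * h₄
  have key₂ : ∀ x b z d, IsSelfAdjoint x → IsSelfAdjoint b → IsSelfAdjoint z →
      homDefect Φ x b * antiDefect Φ z d = 0 := fun x b z d hx hb hz =>
    LinearMap.eq_zero_of_forall_isSelfAdjoint
      (LinearMap.mulLeft ℂ (homDefect Φ x b) ∘ₗ antiDefect Φ z)
      (fun d hd => key x b z d hx hb hz hd) d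
  have key₃ : ∀ x b z d, IsSelfAdjoint x → IsSelfAdjoint b →
      homDefect Φ x b * antiDefect Φ z d = 0 := fun x b z d hx hb =>
    LinearMap.eq_zero_of_forall_isSelfAdjoint
      (LinearMap.mulLeft ℂ (homDefect Φ x b) ∘ₗ (antiDefect Φ).flip d)
      (fun z hz => key₂ x b z d hx hb hz) z
  have key₄ : ∀ x b z d, IsSelfAdjoint x →
      homDefect Φ x b * antiDefect Φ z d = 0 := fun x b z d hx =>
    LinearMap.eq_zero_of_forall_isSelfAdjoint
      (LinearMap.mulRight ℂ (antiDefect Φ z d) ∘ₗ homDefect Φ x)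
      (fun b hb => key₃ x b z d hx hb) b
  exact LinearMap.eq_zero_of_forall_isSelfAdjoint
      (LinearMap.mulRight ℂ (antiDefect Φ z d) ∘ₗ (homDefect Φ).flip b)
      (fun x hx => key₄ x b z d hx) x

end IsJordanHom

end JordanDefects

section Kadison

variable {A B : Type*} [Ring A] [Algebra ℂ A] [CStarAlgebra B] [PartialOrder B] [StarOrderedRing B]

open Finset in
theorem bernsteinPolynomial_sum_sq_smul (n : ℕ) :
    ∑ i ∈ range (n + 1), (i ^ 2) • bernsteinPolynomial ℂ n i =
      (n ^ 2) • Polynomial.X ^ 2 + n • (Polynomial.X - Polynomial.X ^ 2) := by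
  have h₀ := bernsteinPolynomial.sum ℂ n
  have h₁ := bernsteinPolynomial.sum_smul ℂ n
  have h₂ := bernsteinPolynomial.variance ℂ n
  have h : ∑ i ∈ range (n + 1), (i ^ 2) • bernsteinPolynomial ℂ n i =
      ∑ i ∈ range (n + 1), ((n • Polynomial.X - (i : Polynomial ℂ)) ^ 2 *
        bernsteinPolynomial ℂ n i) +
      (2 * n • Polynomial.X) * ∑ i ∈ range (n + 1), i • bernsteinPolynomial ℂ n i -
      (n • Polynomial.X) ^ 2 * ∑ i ∈ range (n + 1), bernsteinPolynomial ℂ n i := by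
    rw [mul_sum, mul_sum, ← sum_add_distrib, ← sum_sub_distrib]
    refine sum_congr rfl fun i _ => ?_
    simp only [nsmul_eq_mul]
    push_cast
    ring
  rw [h, h₀, h₁, h₂]
  simp only [nsmul_eq_mul]
  push_cast
  ring

open Finset in
/-- Kadison's inequality for a unital linear map that is positive on the Bernstein monomials
in `b`. -/
theorem map_mul_map_le_map_mul_self (Φ : A →ₗ[ℂ] B) (h₁ : Φ 1 = 1) (b : A)
    (hb : ∀ i j : ℕ, 0 ≤ Φ (b ^ i * (1 - b) ^ j)) : Φ b * Φ b ≤ Φ (b * b) := by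
  let Ψ : Polynomial ℂ →ₗ[ℂ] B := Φ ∘ₗ (Polynomial.aeval b).toLinearMap
  have hX : Ψ Polynomial.X = Φ b := by simp [Ψ]
  have hX2 : Ψ (Polynomial.X ^ 2) = Φ (b * b) := by simp [Ψ, pow_two]
  have hpos : ∀ n i, 0 ≤ Ψ (bernsteinPolynomial ℂ n i) := by
    intro n i
    have : Ψ (bernsteinPolynomial ℂ n i) = n.choose i • Φ (b ^ i * (1 - b) ^ (n - i)) := by
      rw [← map_nsmul]
      simp [Ψ, bernsteinPolynomial, mul_assoc]
    rw [this]
    exact nsmul_nonneg (hb _ _) _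
  have hsa : IsSelfAdjoint (Φ b) := by
    simpa using IsSelfAdjoint.of_nonneg (hb 1 0)
  have main : ∀ n : ℕ, 0 ≤ (n ^ 2) • (Φ (b * b) - Φ b * Φ b) + n • (Φ b - Φ (b * b)) := by
    intro n
    have hs₀ : ∑ i ∈ range (n + 1), Ψ (bernsteinPolynomial ℂ n i) = 1 := by
      rw [← map_sum, bernsteinPolynomial.sum]; simp [Ψ, h₁]
    have hs₁ : ∑ i ∈ range (n + 1), i • Ψ (bernsteinPolynomial ℂ n i) = n • Φ b := by
      simp only [← map_nsmul, ← map_sum]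
      rw [bernsteinPolynomial.sum_smul, map_nsmul, hX, map_nsmul]
    have hs₂ : ∑ i ∈ range (n + 1), (i ^ 2) • Ψ (bernsteinPolynomial ℂ n i) =
        (n ^ 2) • Φ (b * b) + n • (Φ b - Φ (b * b)) := by
      simp only [← map_nsmul, ← map_sum]
      rw [bernsteinPolynomial_sum_sq_smul, map_add, map_nsmul, map_nsmul, map_sub, hX, hX2]
      simp only [map_nsmul]
    have : (n ^ 2) • (Φ (b * b) - Φ b * Φ b) + n • (Φ b - Φ (b * b)) =
        ∑ i ∈ range (n + 1), (n • Φ b - i • 1) * Ψ (bernsteinPolynomial ℂ n i) *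
          (n • Φ b - i • 1) := by
      have e : ∀ i, (n • Φ b - i • 1) * Ψ (bernsteinPolynomial ℂ n i) * (n • Φ b - i • 1) =
          (n • Φ b) * Ψ (bernsteinPolynomial ℂ n i) * (n • Φ b) -
          (n • Φ b) * (i • Ψ (bernsteinPolynomial ℂ n i)) -
          (i • Ψ (bernsteinPolynomial ℂ n i)) * (n • Φ b) +
          (i ^ 2) • Ψ (bernsteinPolynomial ℂ n i) := by
        intro i
        simp only [sub_mul, mul_sub, smul_mul_assoc, mul_smul_comm, one_mul, mul_one, smul_smul,
          smul_sub, pow_two, mul_comm i n]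
        abel
      simp only [e]
      rw [sum_add_distrib, sum_sub_distrib, sum_sub_distrib, ← sum_mul, ← mul_sum, ← mul_sum,
        ← sum_mul, hs₀, hs₁, hs₂]
      simp only [mul_one, smul_mul_assoc, mul_smul_comm, smul_sub, smul_smul, pow_two]
      abel
    rw [this]
    refine sum_nonneg fun i _ => (IsSelfAdjoint.conjugate_nonneg (hpos n i) ?_)
    simp only [IsSelfAdjoint, star_sub, star_nsmul, hsa.star_eq, star_one]
  rw [← sub_nonneg]
  have lim : Filter.Tendsto
      (fun n : ℕ => (Φ (b * b) - Φ b * Φ b) + (1 / ((n : ℝ) + 1)) • (Φ b - Φ (b * b)))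
      Filter.atTop (nhds (Φ (b * b) - Φ b * Φ b)) := by
    have h := (tendsto_const_nhds (x := Φ (b * b) - Φ b * Φ b)).add
      ((tendsto_one_div_add_atTop_nhds_zero_nat (𝕜 := ℝ)).smul_const (Φ b - Φ (b * b)))
    rwa [zero_smul, add_zero] at h
  refine ge_of_tendsto' lim fun n => ?_
  have h := smul_nonneg (show 0 ≤ 1 / ((n : ℝ) + 1) ^ 2 by positivity) (main (n + 1))
  convert h using 1
  have hn : (n : ℝ) + 1 ≠ 0 := by positivity
  rw [smul_add, ← Nat.cast_smul_eq_nsmul ℝ, ← Nat.cast_smul_eq_nsmul ℝ (n + 1), smul_smul,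
    smul_smul]
  push_cast
  congr 1
  · rw [one_div_mul_cancel (by positivity), one_smul]
  · congr 1; field_simp

end Kadison

section QuadraticBound

variable {E V : Type*} [NormedAddCommGroup E] [InnerProductSpace ℂ E]
  [AddCommGroup V] [Module ℂ V]

theorem LinearMap.four_mul_inner_eq (f e : V →ₗ[ℂ] E) (u v : V) :
    4 * ⟪f u, e v⟫_ℂ = ⟪f (u + v), e (u + v)⟫_ℂ - ⟪f (u - v), e (u - v)⟫_ℂ -
      Complex.I * ⟪f (u + Complex.I • v), e (u + Complex.I • v)⟫_ℂ +
      Complex.I * ⟪f (u - Complex.I • v), e (u - Complex.I • v)⟫_ℂ := by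
  simp only [map_add, map_sub, map_smul, inner_add_left, inner_add_right, inner_sub_left,
    inner_sub_right, inner_smul_left, inner_smul_right, Complex.conj_I]
  linear_combination (norm := ring_nf) 2 * ((⟪f v, e u⟫_ℂ) - ⟪f u, e v⟫_ℂ) * Complex.I_sq
  simp only [Complex.I_sq]
  ring

/-- A bound on the quadratic form `⟪f u, e u⟫` of a pair of linear maps, the second with dense
range, bounds the first map in terms of the second. -/
theorem LinearMap.norm_le_of_norm_inner_le {f e : V →ₗ[ℂ] E} (he : DenseRange e) {c : ℝ}
    (hc : 0 < c) (h : ∀ u, ‖⟪f u, e u⟫_ℂ‖ ≤ c * ‖e u‖ ^ 2) (u : V) : ‖f u‖ ≤ 2 * c * ‖e u‖ := by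
  have hpol : ∀ v, ‖⟪f u, e v⟫_ℂ‖ ≤ c * (‖e u‖ ^ 2 + ‖e v‖ ^ 2) := by
    intro v
    have h₁ := parallelogram_law_with_norm ℂ (e u) (e v)
    have h₂ := parallelogram_law_with_norm ℂ (e u) (Complex.I • e v)
    rw [norm_smul, Complex.norm_I, one_mul] at h₂
    have h₃ : ‖4 * ⟪f u, e v⟫_ℂ‖ ≤ c * ‖e (u + v)‖ ^ 2 + c * ‖e (u - v)‖ ^ 2 +
        c * ‖e (u + Complex.I • v)‖ ^ 2 + c * ‖e (u - Complex.I • v)‖ ^ 2 := by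
      rw [LinearMap.four_mul_inner_eq]
      refine (norm_add_le _ _).trans (add_le_add ((norm_sub_le _ _).trans
        (add_le_add ((norm_sub_le _ _).trans (add_le_add (h _) (h _))) ?_)) ?_)
      all_goals
        rw [norm_mul, Complex.norm_I, one_mul]
        exact h _
    rw [norm_mul, map_add, map_sub, map_add, map_sub, map_smul] at h₃
    norm_num at h₃
    nlinarith
  have hden : ∀ w, ‖⟪f u, w⟫_ℂ‖ ≤ c * (‖e u‖ ^ 2 + ‖w‖ ^ 2) :=
    fun w => he.induction_on (p := fun w => ‖⟪f u, w⟫_ℂ‖ ≤ c * (‖e u‖ ^ 2 + ‖w‖ ^ 2)) w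
      (isClosed_le (by fun_prop) (by fun_prop)) hpol
  have h₁ := hden (((1 / (2 * c) : ℝ) : ℂ) • f u)
  rw [inner_smul_right, inner_self_eq_norm_sq_to_K, norm_smul, norm_mul, Complex.norm_real,
    norm_pow, RCLike.norm_ofReal, abs_norm,
    Real.norm_of_nonneg (by positivity)] at h₁
  have h₂ : ‖f u‖ ^ 2 ≤ (2 * c * ‖e u‖) ^ 2 := by
    have := mul_le_mul_of_nonneg_left h₁ (show 0 ≤ 4 * c by positivity)
    have e₁ : 4 * c * (1 / (2 * c) * ‖f u‖ ^ 2) = 2 * ‖f u‖ ^ 2 := by field_simp; ring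
    have e₂ : 4 * c * (c * (‖e u‖ ^ 2 + (1 / (2 * c) * ‖f u‖) ^ 2)) =
        (2 * c * ‖e u‖) ^ 2 + ‖f u‖ ^ 2 := by field_simp; ring
    linarith
  exact le_of_sq_le_sq h₂ (by positivity)

end QuadraticBound

namespace VonNeumannAlgebra

/-- The map `x ↦ x v` from a von Neumann algebra to the Hilbert space it acts on. -/
noncomputable def orbitMap (S : VonNeumannAlgebra H) (v : H) : S.toStarSubalgebra →ₗ[ℂ] H where
  toFun x := (x : H →L[ℂ] H) v
  map_add' _ _ := rfl
  map_smul' _ _ := rfl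

theorem orbitMap_apply (S : VonNeumannAlgebra H) (v : H) (x : S.toStarSubalgebra) :
    S.orbitMap v x = (x : H →L[ℂ] H) v := rfl

theorem smul_mem (S : VonNeumannAlgebra H) (c : ℂ) {x : H →L[ℂ] H} (hx : x ∈ S) : c • x ∈ S :=
  S.toStarSubalgebra.smul_mem hx c

theorem commutant_comm {S : VonNeumannAlgebra H} {a x : H →L[ℂ] H} (ha : a ∈ S.commutant)
    (hx : x ∈ S) (v : H) : x (a v) = a (x v) :=
  congrArg (fun T : H →L[ℂ] H => T v) (mem_commutant_iff.1 ha x hx)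

theorem denseRange_orbitMap_of_cyclic {S : VonNeumannAlgebra H} {v : H}
    (h : IsCyclicVector S v) : DenseRange (S.orbitMap v) := by
  refine h.mono ?_
  have : Submodule.span ℂ ((fun x : H →L[ℂ] H => x v) '' (S : Set (H →L[ℂ] H))) ≤
      LinearMap.range (S.orbitMap v) := by
    rw [Submodule.span_le]
    rintro _ ⟨x, hx, rfl⟩
    exact ⟨⟨x, hx⟩, rfl⟩
  exact this

/-- The orthogonal projection onto a closed subspace invariant under the commutant of `S`
belongs to `S`. -/
theorem starProjection_mem {S : VonNeumannAlgebra H} (K : Submodule ℂ H)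
    [K.HasOrthogonalProjection] (h : ∀ a ∈ S.commutant, ∀ v ∈ K, a v ∈ K) :
    K.starProjection ∈ S := by
  rw [IsStarProjection.mem_iff (isStarProjection_starProjection (U := K))]
  intro a ha
  rw [Submodule.range_starProjection]
  exact fun v hv => h a ha v hv

theorem denseRange_orbitMap_of_separating {S : VonNeumannAlgebra H} {v : H}
    (h : IsSeparatingVector S v) : DenseRange (S.commutant.orbitMap v) := by
  let K := (LinearMap.range (S.commutant.orbitMap v)).topologicalClosure
  have : CompleteSpace K := (Submodule.isClosed_topologicalClosure _).completeSpace_coe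
  have hK : ∀ a ∈ S.commutant, ∀ w ∈ K, a w ∈ K := by
    intro a ha w hw
    refine map_mem_closure a.continuous hw ?_
    rintro _ ⟨b, rfl⟩
    exact ⟨⟨a, ha⟩ * b, rfl⟩
  have hp := starProjection_mem K hK
  have hv : v ∈ K := Submodule.le_topologicalClosure _ ⟨1, rfl⟩
  have h1 := h (1 - K.starProjection) (sub_mem (one_mem S) hp) (by
    rw [sub_apply, one_apply_eq_self,
      Submodule.starProjection_eq_self_iff.2 hv, sub_self])
  have hall : ∀ w, w ∈ K := fun w => by
    rw [← Submodule.starProjection_eq_self_iff]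
    have := congrArg (fun T : H →L[ℂ] H => T w) h1
    exact (sub_eq_zero.1 this).symm
  exact fun w => hall w

end VonNeumannAlgebra

namespace VonNeumannAlgebra

open scoped ComplexOrder

theorem inner_nonneg_of_mem_sharpCone {M : VonNeumannAlgebra H} {ξ ζ : H}
    (hζ : ζ ∈ sharpCone M ξ) {a : H →L[ℂ] H} (ha : a ∈ M.commutant) : 0 ≤ ⟪a ζ, a ξ⟫_ℂ := by
  have hcl : IsClosed {ζ : H | 0 ≤ ⟪a ζ, a ξ⟫_ℂ} := isClosed_le continuous_const (by fun_prop)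
  refine closure_minimal ?_ hcl hζ
  rintro _ ⟨b, hb, hpos, rfl⟩
  rw [Set.mem_ofPred_eq, ← commutant_comm ha hb]
  exact hpos.inner_nonneg_left _

theorem isPositive_norm_smul_one_add {b : H →L[ℂ] H} (hb : IsSelfAdjoint b) :
    (((‖b‖ : ℝ) : ℂ) • (1 : H →L[ℂ] H) + b).IsPositive := by
  rw [← ContinuousLinearMap.nonneg_iff_isPositive]
  have h := hb.neg_algebraMap_norm_le_self
  rw [Algebra.algebraMap_eq_smul_one] at h
  rw [Complex.coe_smul]
  exact neg_le_iff_add_nonneg'.1 h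

variable {M N : VonNeumannAlgebra H} {ξ : H}

theorem exists_norm_apply_le (hsep : IsSeparatingVector M ξ)
    (hpos : ∀ b ∈ N, b.IsPositive → ∀ a ∈ M.commutant, 0 ≤ ⟪a (b ξ), a ξ⟫_ℂ)
    {x : H →L[ℂ] H} (hx : x ∈ N) :
    ∃ C, ∀ a, ‖M.commutant.orbitMap (x ξ) a‖ ≤ C * ‖M.commutant.orbitMap ξ a‖ := by
  have key : ∀ b ∈ N, IsSelfAdjoint b →
      ∃ C, ∀ a, ‖M.commutant.orbitMap (b ξ) a‖ ≤ C * ‖M.commutant.orbitMap ξ a‖ := by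
    intro b hb hsa
    refine ⟨_, LinearMap.norm_le_of_norm_inner_le (denseRange_orbitMap_of_separating hsep)
      (c := ‖b‖ + 1) (by positivity) fun a => ?_⟩
    have h₁ := hpos _ (add_mem (N.smul_mem (‖b‖ : ℝ) (one_mem N)) hb)
      (isPositive_norm_smul_one_add hsa) a a.2
    have h₂ := hpos _ (add_mem (N.smul_mem (‖-b‖ : ℝ) (one_mem N)) (neg_mem hb))
      (isPositive_norm_smul_one_add hsa.neg) a a.2
    rw [norm_neg] at h₂
    simp only [add_apply, neg_apply, smul_apply, one_apply_eq_self, map_add, map_neg, map_smul,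
      inner_add_left, inner_neg_left, inner_smul_left, Complex.conj_ofReal,
      inner_self_eq_norm_sq_to_K] at h₁ h₂
    simp only [orbitMap_apply]
    set q := ⟪(a : H →L[ℂ] H) (b ξ), (a : H →L[ℂ] H) ξ⟫_ℂ
    obtain ⟨hr₁, hi⟩ := Complex.le_def.1 h₁
    have hr₂ := (Complex.le_def.1 h₂).1
    have e : ((‖b‖ : ℝ) : ℂ) * (RCLike.ofReal ‖(a : H →L[ℂ] H) ξ‖ : ℂ) ^ 2 =
        ((‖b‖ * ‖(a : H →L[ℂ] H) ξ‖ ^ 2 : ℝ) : ℂ) := by push_cast; rfl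
    rw [e] at hr₁ hi hr₂
    simp only [Complex.add_re, Complex.add_im, Complex.neg_re, Complex.ofReal_re,
      Complex.ofReal_im, Complex.zero_re, Complex.zero_im, zero_add] at hr₁ hi hr₂
    rw [← Complex.re_add_im q, ← hi, Complex.ofReal_zero, zero_mul, add_zero, Complex.norm_real,
      Real.norm_eq_abs, abs_le]
    constructor <;> nlinarith [sq_nonneg ‖(a : H →L[ℂ] H) ξ‖]
  let X : N.toStarSubalgebra := ⟨x, hx⟩
  obtain ⟨C₁, h₁⟩ := key _ (realPart X : N.toStarSubalgebra).2
    (congrArg Subtype.val (realPart X).2.star_eq)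
  obtain ⟨C₂, h₂⟩ := key _ (imaginaryPart X : N.toStarSubalgebra).2
    (congrArg Subtype.val (imaginaryPart X).2.star_eq)
  have hX : x = ((realPart X : N.toStarSubalgebra) : H →L[ℂ] H) +
      Complex.I • ((imaginaryPart X : N.toStarSubalgebra) : H →L[ℂ] H) :=
    (congrArg Subtype.val (realPart_add_I_smul_imaginaryPart X)).symm
  refine ⟨C₁ + C₂, fun a => ?_⟩
  have h : M.commutant.orbitMap (x ξ) a =
      M.commutant.orbitMap (((realPart X : N.toStarSubalgebra) : H →L[ℂ] H) ξ) a +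
      Complex.I • M.commutant.orbitMap
        (((imaginaryPart X : N.toStarSubalgebra) : H →L[ℂ] H) ξ) a := by
    simp only [orbitMap_apply]
    rw [← map_smul, ← map_add]
    exact congrArg (fun T : H →L[ℂ] H => (a : H →L[ℂ] H) (T ξ)) hX
  rw [h, add_mul]
  refine (norm_add_le _ _).trans (add_le_add (h₁ a) ?_)
  rw [norm_smul, Complex.norm_I, one_mul]
  exact h₂ a

theorem exists_mem_apply_eq (hsep : IsSeparatingVector M ξ)
    (hpos : ∀ b ∈ N, b.IsPositive → ∀ a ∈ M.commutant, 0 ≤ ⟪a (b ξ), a ξ⟫_ℂ)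
    (x : N.toStarSubalgebra) : ∃ y ∈ M, y ξ = (x : H →L[ℂ] H) ξ := by
  have hd := denseRange_orbitMap_of_separating hsep
  let y := (M.commutant.orbitMap ((x : H →L[ℂ] H) ξ)).extendOfNorm (M.commutant.orbitMap ξ)
  have hy : ∀ a, y (M.commutant.orbitMap ξ a) = M.commutant.orbitMap ((x : H →L[ℂ] H) ξ) a :=
    LinearMap.extendOfNorm_eq hd (exists_norm_apply_le hsep hpos x.2)
  refine ⟨y, ?_, hy 1⟩
  rw [← commutant_commutant M, mem_commutant_iff]
  intro a ha
  ext v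
  refine hd.induction_on (p := fun v => a (y v) = y (a v)) v
    (isClosed_eq (by fun_prop) (by fun_prop)) fun c => ?_
  have h := hy (⟨a, ha⟩ * c)
  rw [hy]
  exact h.symm

/-- The linear map from `N` to operators in `M` determined by `Φ x ξ = x ξ`. -/
theorem exists_linearMap_apply_eq (hsep : IsSeparatingVector M ξ)
    (hpos : ∀ b ∈ N, b.IsPositive → ∀ a ∈ M.commutant, 0 ≤ ⟪a (b ξ), a ξ⟫_ℂ) :
    ∃ Φ : N.toStarSubalgebra →ₗ[ℂ] (H →L[ℂ] H), (∀ x, Φ x ∈ M) ∧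
      ∀ x, Φ x ξ = (x : H →L[ℂ] H) ξ := by
  choose Φ hM hξ using exists_mem_apply_eq hsep hpos
  have huniq : ∀ y ∈ M, ∀ z ∈ M, y ξ = z ξ → y = z := fun y hy z hz h =>
    sub_eq_zero.1 (hsep _ (sub_mem hy hz) (by rw [sub_apply, h, sub_self]))
  refine ⟨⟨⟨Φ, fun x y => ?_⟩, fun c x => ?_⟩, hM, hξ⟩
  · refine huniq _ (hM _) _ (add_mem (hM x) (hM y)) ?_
    rw [add_apply, hξ, hξ, hξ]
    rfl
  · refine huniq _ (hM _) _ (M.smul_mem c (hM x)) ?_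
    rw [RingHom.id_apply, smul_apply, hξ, hξ]
    rfl

end VonNeumannAlgebra

namespace VonNeumannAlgebra

open scoped ComplexOrder

variable {M N : VonNeumannAlgebra H} {ξ : H} {Φ : N.toStarSubalgebra →ₗ[ℂ] (H →L[ℂ] H)}

theorem map_isPositive (hsep : IsSeparatingVector M ξ)
    (hpos : ∀ b ∈ N, b.IsPositive → ∀ a ∈ M.commutant, 0 ≤ ⟪a (b ξ), a ξ⟫_ℂ)
    (hM : ∀ x, Φ x ∈ M) (hξ : ∀ x, Φ x ξ = (x : H →L[ℂ] H) ξ)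
    {b : N.toStarSubalgebra} (hb : (b : H →L[ℂ] H).IsPositive) : (Φ b).IsPositive := by
  have h : ∀ v, 0 ≤ ⟪Φ b v, v⟫_ℂ := fun v =>
    (denseRange_orbitMap_of_separating hsep).induction_on (p := fun v => 0 ≤ ⟪Φ b v, v⟫_ℂ) v
      (isClosed_le continuous_const (by fun_prop)) fun a => by
        rw [orbitMap_apply, commutant_comm a.2 (hM b), hξ]
        exact hpos _ b.2 hb _ a.2
  rw [ContinuousLinearMap.isPositive_iff_complex]
  intro v
  obtain ⟨h₁, h₂⟩ := Complex.le_def.1 (h v)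
  exact ⟨Complex.ext rfl h₂, h₁⟩

theorem map_one_of_apply_eq (hsep : IsSeparatingVector M ξ)
    (hM : ∀ x, Φ x ∈ M) (hξ : ∀ x, Φ x ξ = (x : H →L[ℂ] H) ξ) : Φ 1 = 1 :=
  sub_eq_zero.1 <| hsep _ (sub_mem (hM 1) (one_mem M)) <| by
    rw [sub_apply, hξ, sub_eq_zero]
    rfl

theorem map_star_of_map_isPositive (h₁ : Φ 1 = 1)
    (hΦ : ∀ b : N.toStarSubalgebra, (b : H →L[ℂ] H).IsPositive → (Φ b).IsPositive)
    (x : N.toStarSubalgebra) : Φ (star x) = star (Φ x) := by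
  have key : ∀ b : N.toStarSubalgebra, IsSelfAdjoint b → star (Φ b) = Φ b := by
    intro b hb
    have h := (hΦ ((‖(b : H →L[ℂ] H)‖ : ℂ) • 1 + b)
      (isPositive_norm_smul_one_add (congrArg Subtype.val hb.star_eq))).isSelfAdjoint.star_eq
    simpa [h₁] using h
  rw [← realPart_add_I_smul_imaginaryPart x]
  simp only [star_add, star_smul, map_add, map_smul, key _ (realPart x).2,
    key _ (imaginaryPart x).2, (realPart x).2.star_eq, (imaginaryPart x).2.star_eq]

theorem homDefect_self_of_nonneg_of_le_one (hsep : IsSeparatingVector M ξ)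
    (hM : ∀ x, Φ x ∈ M) (hξ : ∀ x, Φ x ξ = (x : H →L[ℂ] H) ξ)
    (hΦ : ∀ b : N.toStarSubalgebra, (b : H →L[ℂ] H).IsPositive → (Φ b).IsPositive)
    {b : N.toStarSubalgebra} (hb₀ : 0 ≤ (b : H →L[ℂ] H)) (hb₁ : (b : H →L[ℂ] H) ≤ 1) :
    homDefect Φ b b = 0 := by
  have h₁ := map_one_of_apply_eq hsep hM hξ
  have hle : Φ b * Φ b ≤ Φ (b * b) := by
    refine map_mul_map_le_map_mul_self Φ h₁ b fun i j => ?_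
    rw [ContinuousLinearMap.nonneg_iff_isPositive]
    refine hΦ _ ((ContinuousLinearMap.nonneg_iff_isPositive _).1 ?_)
    change 0 ≤ (b : H →L[ℂ] H) ^ i * (1 - (b : H →L[ℂ] H)) ^ j
    exact Commute.mul_nonneg (CStarAlgebra.pow_nonneg hb₀ i)
      (CStarAlgebra.pow_nonneg (sub_nonneg.2 hb₁) j)
      (((Commute.one_right _).sub_right (Commute.refl _)).pow_pow i j)
  refine hsep _ (sub_mem (hM _) (mul_mem (hM _) (hM _))) ?_
  have hsa := (hΦ b ((ContinuousLinearMap.nonneg_iff_isPositive _).1 hb₀)).isSelfAdjoint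
  have hsb := ((ContinuousLinearMap.nonneg_iff_isPositive _).1 hb₀).isSelfAdjoint
  have h0 : ⟪homDefect Φ b b ξ, ξ⟫_ℂ = 0 := by
    have e₁ : ⟪Φ b (Φ b ξ), ξ⟫_ℂ = ⟪Φ b ξ, Φ b ξ⟫_ℂ :=
      hsa.isSymmetric _ _
    have e₂ : ⟪(b : H →L[ℂ] H) ((b : H →L[ℂ] H) ξ), ξ⟫_ℂ =
        ⟪(b : H →L[ℂ] H) ξ, (b : H →L[ℂ] H) ξ⟫_ℂ := hsb.isSymmetric _ _
    rw [homDefect_apply, sub_apply, hξ, inner_sub_left, sub_eq_zero]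
    refine e₂.trans ?_
    rw [← hξ]
    exact e₁.symm
  obtain ⟨s, hs⟩ := CStarAlgebra.nonneg_iff_eq_star_mul_self.1
    (show 0 ≤ homDefect Φ b b from sub_nonneg.2 hle)
  rw [hs, ContinuousLinearMap.star_eq_adjoint, mul_apply_eq_comp,
    ContinuousLinearMap.adjoint_inner_left, inner_self_eq_zero] at h0
  rw [hs, mul_apply_eq_comp, h0, map_zero]

/-- A linear map into `M` implementing `x ↦ x ξ` and preserving positivity is a Jordan
homomorphism. -/
theorem isJordanHom_of_map_isPositive (hsep : IsSeparatingVector M ξ)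
    (hM : ∀ x, Φ x ∈ M) (hξ : ∀ x, Φ x ξ = (x : H →L[ℂ] H) ξ)
    (hΦ : ∀ b : N.toStarSubalgebra, (b : H →L[ℂ] H).IsPositive → (Φ b).IsPositive) :
    IsJordanHom Φ := by
  have h₁ := map_one_of_apply_eq hsep hM hξ
  have hsa : ∀ b : N.toStarSubalgebra, IsSelfAdjoint b → homDefect Φ b b = 0 := by
    intro b hb
    have hb' : IsSelfAdjoint (b : H →L[ℂ] H) := congrArg Subtype.val hb.star_eq
    set r : ℝ := ‖(b : H →L[ℂ] H)‖ with hr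
    set t : ℝ := 2 * r + 1 with ht
    have hr₀ : 0 ≤ r := norm_nonneg _
    have ht₀ : 0 < t := by positivity
    have hadd : 0 ≤ (r : ℂ) • (1 : H →L[ℂ] H) + b :=
      (ContinuousLinearMap.nonneg_iff_isPositive _).2 (isPositive_norm_smul_one_add hb')
    have hsub : 0 ≤ (r : ℂ) • (1 : H →L[ℂ] H) + -b := by
      have := (ContinuousLinearMap.nonneg_iff_isPositive _).2
        (isPositive_norm_smul_one_add hb'.neg)
      rwa [norm_neg] at this
    rw [Complex.coe_smul] at hadd hsub
    have h := homDefect_self_of_nonneg_of_le_one hsep hM hξ hΦ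
      (b := ((t⁻¹ : ℝ) : ℂ) • ((r : ℂ) • 1 + b)) (by
        change 0 ≤ ((t⁻¹ : ℝ) : ℂ) • ((r : ℂ) • (1 : H →L[ℂ] H) + b)
        rw [Complex.coe_smul, Complex.coe_smul]
        exact smul_nonneg (by positivity) hadd) (by
        change ((t⁻¹ : ℝ) : ℂ) • ((r : ℂ) • (1 : H →L[ℂ] H) + b) ≤ 1
        rw [Complex.coe_smul, Complex.coe_smul, ← sub_nonneg]
        have e : (1 : H →L[ℂ] H) - t⁻¹ • (r • (1 : H →L[ℂ] H) + b) =
            t⁻¹ • ((r • (1 : H →L[ℂ] H) + -b) + (1 : H →L[ℂ] H)) := by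
          have : (1 : H →L[ℂ] H) = t⁻¹ • (t • (1 : H →L[ℂ] H)) := by
            rw [smul_smul, inv_mul_cancel₀ ht₀.ne', one_smul]
          nth_rw 1 [this]
          rw [← smul_sub, ht]
          module
        rw [e]
        exact smul_nonneg (by positivity) (add_nonneg hsub zero_le_one))
    have hl : ∀ y, homDefect Φ 1 y = 0 := fun y => by rw [homDefect_apply, h₁]; simp
    have hr : ∀ y, homDefect Φ y 1 = 0 := fun y => by rw [homDefect_apply, h₁]; simp
    simp only [map_smul, map_add, LinearMap.smul_apply, LinearMap.add_apply, hl, hr, smul_zero,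
      zero_add] at h
    have ht' : ((t⁻¹ : ℝ) : ℂ) ≠ 0 := Complex.ofReal_ne_zero.2 (inv_pos.2 ht₀).ne'
    exact (smul_eq_zero_iff_right ht').1 ((smul_eq_zero_iff_right ht').1 h)
  have hdiag := LinearMap.self_eq_zero_of_forall_isSelfAdjoint (homDefect Φ) hsa
  refine ⟨h₁, fun x y => ?_⟩
  have h := hdiag (x + y)
  simp only [map_add, LinearMap.add_apply, hdiag x, hdiag y, zero_add, add_zero] at h
  rw [homDefect_apply, homDefect_apply] at h
  linear_combination (norm := abel) h

end VonNeumannAlgebra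

namespace VonNeumannAlgebra

/-- If the cone of `N` at `ξ` is contained in the cone of `M`, there is a Jordan
`*`-homomorphism `Φ` from `N` into `M` with `Φ x ξ = x ξ`. -/
theorem exists_isJordanHom_of_subset_sharpCone {M N : VonNeumannAlgebra H} {ξ : H}
    (hsep : IsSeparatingVector M ξ) (hsub : sharpCone N ξ ⊆ sharpCone M ξ) :
    ∃ Φ : N.toStarSubalgebra →ₗ[ℂ] (H →L[ℂ] H), (∀ x, Φ x ∈ M) ∧
      (∀ x, Φ x ξ = (x : H →L[ℂ] H) ξ) ∧ IsJordanHom Φ ∧ ∀ x, Φ (star x) = star (Φ x) := by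
  have hpos := fun b (hb : b ∈ N) (hb₀ : b.IsPositive) a (ha : a ∈ M.commutant) =>
    inner_nonneg_of_mem_sharpCone (hsub (subset_closure ⟨b, hb, hb₀, rfl⟩)) ha
  obtain ⟨Φ, hM, hξ⟩ := exists_linearMap_apply_eq hsep hpos
  have hΦ := fun b => map_isPositive hsep hpos hM hξ (b := b)
  exact ⟨Φ, hM, hξ, isJordanHom_of_map_isPositive hsep hM hξ hΦ,
    map_star_of_map_isPositive (map_one_of_apply_eq hsep hM hξ) hΦ⟩

end VonNeumannAlgebra

namespace VonNeumannAlgebra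

variable {M N : VonNeumannAlgebra H} {ξ : H}

theorem inner_star_apply (x : H →L[ℂ] H) (u v : H) : ⟪star x u, v⟫_ℂ = ⟪u, x v⟫_ℂ :=
  ContinuousLinearMap.adjoint_inner_left x v u

theorem inner_apply_star (x : H →L[ℂ] H) (u v : H) : ⟪u, star x v⟫_ℂ = ⟪x u, v⟫_ℂ :=
  ContinuousLinearMap.adjoint_inner_right x u v

/-- If `p` is a projection in the commutant of `N`, the vector `ξ` is cyclic for `N`, and
`(1 - p) ξ` is tracial for `N`, then `p` belongs to `N`. -/
theorem mem_of_isStarProjection_of_tracial (hcyc : IsCyclicVector N ξ) {p : H →L[ℂ] H}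
    (hp : IsStarProjection p) (hpN : p ∈ N.commutant)
    (htr : ∀ x ∈ N, ∀ y ∈ N,
      ⟪(x * y) ((1 - p) ξ), (1 - p) ξ⟫_ℂ = ⟪(y * x) ((1 - p) ξ), (1 - p) ξ⟫_ℂ) : p ∈ N := by
  have hd := denseRange_orbitMap_of_cyclic hcyc
  have hpp : p * p = p := hp.isIdempotentElem
  have hps : star p = p := hp.isSelfAdjoint
  have hqN : 1 - p ∈ N.commutant := sub_mem (one_mem _) hpN
  set ζ := (1 - p) ξ with hζ
  have hnorm : ∀ x ∈ N, ∀ y ∈ N, ‖star x (y ζ)‖ ≤ ‖y‖ * ‖x ζ‖ := by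
    intro x hx y hy
    have h := htr (star y * x) (mul_mem (star_mem hy) hx) (star x * y)
      (mul_mem (star_mem hx) hy)
    simp only [mul_apply_eq_comp, inner_star_apply] at h
    rw [← inner_apply_star x, ← inner_apply_star y, inner_self_eq_norm_sq_to_K,
      inner_self_eq_norm_sq_to_K] at h
    have h' : ‖star x (y ζ)‖ = ‖star y (x ζ)‖ := by
      have : ‖star x (y ζ)‖ ^ 2 = ‖star y (x ζ)‖ ^ 2 := by exact_mod_cast h
      exact (sq_eq_sq₀ (norm_nonneg _) (norm_nonneg _)).1 this
    rw [h', ← norm_star y]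
    exact (star y).le_opNorm _
  have key : ∀ a ∈ N.commutant, p * a * (1 - p) = 0 := by
    intro a ha
    set w := p * a * (1 - p) with hw
    have hwN : w ∈ N.commutant := mul_mem (mul_mem hpN ha) hqN
    have hbound : ∀ y ∈ N, ∀ v, ‖⟪p v, w (y ζ)⟫_ℂ‖ ≤ ‖star w (p ξ)‖ * (‖y‖ * ‖(1 - p) v‖) := by
      intro y hy v
      refine hd.induction_on
        (p := fun v => ‖⟪p v, w (y ζ)⟫_ℂ‖ ≤ ‖star w (p ξ)‖ * (‖y‖ * ‖(1 - p) v‖)) v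
        (isClosed_le (by fun_prop) (by fun_prop)) fun x => ?_
      have e : ⟪p ((x : H →L[ℂ] H) ξ), w (y ζ)⟫_ℂ =
          ⟪star w (p ξ), star (x : H →L[ℂ] H) (y ζ)⟫_ℂ := by
        rw [← commutant_comm hpN x.2, ← inner_star_apply, ← commutant_comm (star_mem hwN) x.2,
          inner_apply_star]
      rw [orbitMap_apply, e, ← commutant_comm hqN x.2]
      exact (norm_inner_le_norm _ _).trans
        (mul_le_mul_of_nonneg_left (hnorm x x.2 y hy) (norm_nonneg _))
    have hpw : p * w = w := by rw [hw, ← mul_assoc, ← mul_assoc, hpp]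
    have hqw : (1 - p) * w = 0 := by rw [sub_mul, one_mul, hpw, sub_self]
    have hwq : w * (1 - p) = w := by
      rw [hw, mul_assoc, mul_sub, mul_one, sub_mul, one_mul, hpp, sub_self, sub_zero]
    ext η
    have h : ∀ u, ⟪w η, w u⟫_ℂ = 0 := fun u =>
      hd.induction_on (p := fun u => ⟪w η, w u⟫_ℂ = 0) u
        (isClosed_eq (by fun_prop) (by fun_prop)) fun y => by
          have h := hbound y y.2 (w η)
          rw [← mul_apply_eq_comp p, ← mul_apply_eq_comp (1 - p), hpw, hqw, zero_apply, norm_zero,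
            mul_zero, mul_zero, norm_le_zero_iff, hζ, commutant_comm hqN y.2,
            ← mul_apply_eq_comp w, hwq] at h
          exact h
    exact inner_self_eq_zero.1 (h η)
  rw [← commutant_commutant N, mem_commutant_iff]
  intro a ha
  have h₁ := key a ha
  have h₂ := congrArg star (key (star a) (star_mem ha))
  simp only [star_mul, star_sub, star_one, star_star, hps, star_zero] at h₂
  linear_combination (norm := noncomm_ring) h₂ - h₁

variable {Φ : N.toStarSubalgebra →ₗ[ℂ] (H →L[ℂ] H)}

/-- The common kernel of the multiplicative defects of `Φ`. -/
noncomputable def defectKernel (Φ : N.toStarSubalgebra →ₗ[ℂ] (H →L[ℂ] H)) : Submodule ℂ H where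
  carrier := {v | ∀ x y, homDefect Φ x y v = 0}
  add_mem' {u v} hu hv x y := by rw [map_add, hu, hv, add_zero]
  zero_mem' x y := map_zero _
  smul_mem' c v hv x y := by rw [map_smul, hv, smul_zero]

instance : CompleteSpace (defectKernel Φ) := by
  have : IsClosed {v | ∀ x y, homDefect Φ x y v = 0} := by
    simp only [Set.ofPred_forall]
    exact isClosed_iInter fun x => isClosed_iInter fun y =>
      isClosed_eq (by fun_prop) continuous_const
  exact IsClosed.completeSpace_coe (s := (defectKernel Φ : Set H)) (hs := this)

theorem starProjection_defectKernel_mem (hM : ∀ x, Φ x ∈ M) :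
    (defectKernel Φ).starProjection ∈ M := by
  refine starProjection_mem _ fun a ha v hv x y => ?_
  have h : homDefect Φ x y ∈ M := sub_mem (hM _) (mul_mem (hM _) (hM _))
  rw [commutant_comm ha h, hv x y, map_zero]

theorem starProjection_defectKernel_comm_map (hJ : IsJordanHom Φ)
    (hs : ∀ x, Φ (star x) = star (Φ x)) (x : N.toStarSubalgebra) :
    (defectKernel Φ).starProjection * Φ x = Φ x * (defectKernel Φ).starProjection := by
  set p := (defectKernel Φ).starProjection with hp
  have hps : star p = p := (isStarProjection_starProjection (U := defectKernel Φ)).isSelfAdjoint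
  have h : ∀ x, p * (Φ x * p) = Φ x * p := by
    intro w
    ext v
    refine Submodule.starProjection_eq_self_iff.2 fun x b => ?_
    have hv : ∀ x b, homDefect Φ x b (p v) = 0 :=
      Submodule.starProjection_apply_mem (defectKernel Φ) v
    have h := congrArg (fun T : H →L[ℂ] H => T (p v)) (hJ.comm_homDefect w x b)
    simpa [hv] using h
  have h' := congrArg star (h (star x))
  simp only [star_mul, hps, ← hs, star_star] at h'
  rw [← h x, ← h', mul_assoc]

theorem mul_starProjection_defectKernel (hcyc : IsCyclicVector N ξ)
    (hξ : ∀ x, Φ x ξ = (x : H →L[ℂ] H) ξ) (hs : ∀ x, Φ (star x) = star (Φ x))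
    (x : N.toStarSubalgebra) :
    (x : H →L[ℂ] H) * (defectKernel Φ).starProjection =
      Φ x * (defectKernel Φ).starProjection := by
  set p := (defectKernel Φ).starProjection with hp
  have hps : star p = p := (isStarProjection_starProjection (U := defectKernel Φ)).isSelfAdjoint
  have h : ∀ y : N.toStarSubalgebra, p * ((y : H →L[ℂ] H) - Φ y) = 0 := by
    intro y
    ext v
    refine (denseRange_orbitMap_of_cyclic hcyc).induction_on
      (p := fun v => (p * ((y : H →L[ℂ] H) - Φ y)) v = 0) v
      (isClosed_eq (by fun_prop) continuous_const) fun z => ?_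
    have e : ((y : H →L[ℂ] H) - Φ y) (N.orbitMap ξ z) = homDefect Φ y z ξ := by
      rw [homDefect_apply, sub_apply, sub_apply, mul_apply_eq_comp, hξ, hξ]
      rfl
    rw [mul_apply_eq_comp, e, hp, Submodule.starProjection_apply_eq_zero_iff,
      Submodule.mem_orthogonal]
    intro k hk
    rw [← inner_star_apply, IsJordanHom.star_homDefect hs, hk, inner_zero_left]
  have h' := congrArg star (h (star x))
  rw [star_mul, hps, star_sub, hs, star_star, StarMemClass.coe_star, star_star, star_zero,
      sub_mul, sub_eq_zero] at h'
  exact h'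

theorem starProjection_defectKernel_mem_commutant (hcyc : IsCyclicVector N ξ)
    (hJ : IsJordanHom Φ) (hξ : ∀ x, Φ x ξ = (x : H →L[ℂ] H) ξ)
    (hs : ∀ x, Φ (star x) = star (Φ x)) :
    (defectKernel Φ).starProjection ∈ N.commutant := by
  set p := (defectKernel Φ).starProjection with hp
  have hps : star p = p := (isStarProjection_starProjection (U := defectKernel Φ)).isSelfAdjoint
  rw [mem_commutant_iff]
  intro x hx
  have h := mul_starProjection_defectKernel hcyc hξ hs ⟨x, hx⟩
  have h' := congrArg star (mul_starProjection_defectKernel hcyc hξ hs (star ⟨x, hx⟩))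
  rw [← hp, star_mul, star_mul, hps, hs, star_star, StarMemClass.coe_star, star_star,
    starProjection_defectKernel_comm_map hJ hs, ← hp] at h'
  exact h.trans h'.symm

theorem tracial_of_isJordanHom (hcyc : IsCyclicVector N ξ)
    (hJ : IsJordanHom Φ) (hξ : ∀ x, Φ x ξ = (x : H →L[ℂ] H) ξ)
    (hs : ∀ x, Φ (star x) = star (Φ x)) (x y : N.toStarSubalgebra) :
    ⟪((x : H →L[ℂ] H) * y) ((1 - (defectKernel Φ).starProjection) ξ),
        (1 - (defectKernel Φ).starProjection) ξ⟫_ℂ =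
      ⟪((y : H →L[ℂ] H) * x) ((1 - (defectKernel Φ).starProjection) ξ),
        (1 - (defectKernel Φ).starProjection) ξ⟫_ℂ := by
  have hpN := starProjection_defectKernel_mem_commutant hcyc hJ hξ hs
  have hcomm := starProjection_defectKernel_comm_map hJ hs y
  have hproj := isStarProjection_starProjection (U := defectKernel Φ)
  have hg : ∀ v, (defectKernel Φ).starProjection (antiDefect Φ x y v) = antiDefect Φ x y v :=
    fun v => Submodule.starProjection_eq_self_iff.2 fun z b => by
      rw [← mul_apply_eq_comp, hJ.homDefect_mul_antiDefect hs, zero_apply]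
  set p := (defectKernel Φ).starProjection with hp
  have hqN : 1 - p ∈ N.commutant := sub_mem (one_mem _) hpN
  have hqs : star (1 - p) = 1 - p := hproj.one_sub.isSelfAdjoint
  have hqq : (1 - p) * (1 - p) = 1 - p := hproj.one_sub.isIdempotentElem
  have hmove : ∀ z ∈ N, ⟪z ((1 - p) ξ), (1 - p) ξ⟫_ℂ = ⟪(1 - p) (z ξ), ξ⟫_ℂ := by
    intro z hz
    rw [commutant_comm hqN hz, ← inner_star_apply, hqs, ← mul_apply_eq_comp, hqq]
  rw [hmove _ (mul_mem x.2 y.2), hmove _ (mul_mem y.2 x.2)]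
  have h₁ : (1 - p) (((x : H →L[ℂ] H) * y) ξ) = Φ y ((1 - p) ((x : H →L[ℂ] H) ξ)) := by
    have h := hg ξ
    have e : antiDefect Φ x y ξ = ((x : H →L[ℂ] H) * y) ξ - Φ y ((x : H →L[ℂ] H) ξ) := by
      rw [antiDefect_apply, sub_apply, mul_apply_eq_comp, hξ, hξ]
      rfl
    have hc := congrArg (fun T : H →L[ℂ] H => T ((x : H →L[ℂ] H) ξ)) hcomm
    simp only [mul_apply_eq_comp] at hc
    rw [e, map_sub, hc] at h
    rw [sub_apply, sub_apply, map_sub, one_apply_eq_self, one_apply_eq_self]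
    linear_combination (norm := abel) -h
  rw [h₁, ← inner_apply_star, ← hs, hξ, mul_apply_eq_comp, ← commutant_comm hqN y.2]
  exact inner_apply_star _ _ _

end VonNeumannAlgebra

/-- If `ξ₀` is cyclic for `N` and the cone of `N` is contained in `P♯`, then
`ξ₀` separates `N`, there is a central projection `e` of `N` with `N e ⊆ M`, and
`(1 - e) ξ₀` is tracial for `N (1 - e)`. -/
theorem stmt8 (M N : VonNeumannAlgebra H) (ξ₀ : H)
    (hcyc : IsCyclicVector M ξ₀) (hsep : IsSeparatingVector M ξ₀)
    (hcycN : IsCyclicVector N ξ₀)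
    (hsub : closure {ζ : H | ∃ b : H →L[ℂ] H, b ∈ N ∧ b.IsPositive ∧ b ξ₀ = ζ} ⊆
      sharpCone M ξ₀) :
    IsSeparatingVector N ξ₀ ∧
    ∃ e : H →L[ℂ] H, e ∈ N ∧ IsSelfAdjoint e ∧ e * e = e ∧
      (∀ x ∈ N, e * x = x * e) ∧
      (∀ x ∈ N, x * e ∈ M) ∧
      (∀ x ∈ N, ∀ y ∈ N,
        ⟪(x * y) ((1 - e) ξ₀), (1 - e) ξ₀⟫_ℂ = ⟪(y * x) ((1 - e) ξ₀), (1 - e) ξ₀⟫_ℂ) := by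
  obtain ⟨Φ, hM, hξ, hJ, hs⟩ :=
    VonNeumannAlgebra.exists_isJordanHom_of_subset_sharpCone hsep hsub
  have hpN := VonNeumannAlgebra.starProjection_defectKernel_mem_commutant hcycN hJ hξ hs
  have hp := isStarProjection_starProjection (U := VonNeumannAlgebra.defectKernel Φ)
  have htr := fun x (hx : x ∈ N) y (hy : y ∈ N) =>
    VonNeumannAlgebra.tracial_of_isJordanHom hcycN hJ hξ hs ⟨x, hx⟩ ⟨y, hy⟩
  refine ⟨fun x hx h => ?_, _,
    VonNeumannAlgebra.mem_of_isStarProjection_of_tracial hcycN hp hpN htr,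
    hp.isSelfAdjoint, hp.isIdempotentElem,
    fun x hx => (VonNeumannAlgebra.mem_commutant_iff.1 hpN x hx).symm, fun x hx => ?_, htr⟩
  · have hΦ : ∀ y : N.toStarSubalgebra, (y : H →L[ℂ] H) ξ₀ = 0 →
        (star y : H →L[ℂ] H) ξ₀ = 0 := fun y hy => by
      have h₀ := hsep _ (hM y) ((hξ y).trans hy)
      have h₁ := hξ (star y)
      rw [hs, h₀, star_zero, zero_apply] at h₁
      exact h₁.symm
    rw [← star_eq_zero]
    ext v
    refine (VonNeumannAlgebra.denseRange_orbitMap_of_cyclic hcycN).induction_on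
      (p := fun v => star x v = 0) v (isClosed_eq (by fun_prop) continuous_const) fun y => ?_
    have h' := hΦ (star y * ⟨x, hx⟩) (by
      change star (y : H →L[ℂ] H) (x ξ₀) = 0
      rw [h, map_zero])
    simpa [VonNeumannAlgebra.orbitMap_apply] using h'
  · rw [VonNeumannAlgebra.mul_starProjection_defectKernel hcycN hξ hs ⟨x, hx⟩]
    exact mul_mem (hM _) (VonNeumannAlgebra.starProjection_defectKernel_mem hM)
end
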